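/- arXiv:1305.5816 — 4 statements merged into one kernel-verified Lean document; each statement's English description precedes it below -/
import Mathlib

section
/- Let f : ℝ → ℂ be a Schwartz function and let F be its Cauchy transform. Then for every x ∈ ℝ, the jump of F across the real axis recovers f: lim_{ε → 0⁺} ( F(x + iε) − F(x − iε) ) = f(x). -/
open MeasureTheory Complex Filter Topology

/-- The Cauchy transform of a function `f : ℝ → ℂ`. -/
noncomputable def cauchyTransform (f : ℝ → ℂ) (k : ℂ) : ℂ :=
  (1 / (2 * Real.pi * Complex.I)) * ∫ s : ℝ, f s / ((s : ℂ) - k)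

/-- Integrability of the Cauchy integrand off the real axis. -/
theorem integrable_cauchy_aux (f : SchwartzMap ℝ ℂ) (k : ℂ) (hk : k.im ≠ 0) :
    Integrable (fun s : ℝ => f s / ((s : ℂ) - k)) := by
  have hne : ∀ s : ℝ, (s : ℂ) - k ≠ 0 := by
    intro s h
    apply hk
    have := congrArg Complex.im h
    simpa using this
  have hc : Continuous (fun s : ℝ => ((s : ℂ) - k)⁻¹) :=
    (by fun_prop : Continuous (fun s : ℝ => (s : ℂ) - k)).inv₀ hne
  have hb : ∀ s : ℝ, ‖((s : ℂ) - k)⁻¹‖ ≤ |k.im|⁻¹ := by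
    intro s
    rw [norm_inv]
    apply inv_anti₀ (abs_pos.mpr hk)
    have := Complex.abs_im_le_norm ((s : ℂ) - k)
    simpa using this
  simp only [div_eq_mul_inv]
  exact f.integrable.mul_bdd (c := |k.im|⁻¹) hc.aestronglyMeasurable (Eventually.of_forall hb)

/-- The jump as a Poisson integral, after rescaling. -/
theorem cauchy_jump_aux (f : SchwartzMap ℝ ℂ) (x ε : ℝ) (hε : 0 < ε) :
    cauchyTransform f (x + Complex.I * ε) - cauchyTransform f (x - Complex.I * ε) =
      (1 / (Real.pi : ℂ)) * ∫ t : ℝ, f (x + ε * t) * (((1 + t ^ 2)⁻¹ : ℝ) : ℂ) := by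
  have hπ : (Real.pi : ℂ) ≠ 0 := by exact_mod_cast Real.pi_ne_zero
  have hεc : (ε : ℂ) ≠ 0 := by exact_mod_cast hε.ne'
  unfold cauchyTransform
  rw [← mul_sub, ← integral_sub (integrable_cauchy_aux f _ (by simp [hε.ne']))
    (integrable_cauchy_aux f _ (by simp [hε.ne']))]
  set g : ℝ → ℂ := fun s => f s / ((s : ℂ) - (x + Complex.I * ε)) -
    f s / ((s : ℂ) - (x - Complex.I * ε)) with hg
  have h1 : ∫ s, g s = (ε : ℂ) * ∫ t, g (x + ε * t) := by
    have h2 := Measure.integral_comp_mul_left (fun s => g (x + s)) ε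
    rw [h2, integral_add_left_eq_self g x, abs_of_pos (inv_pos.mpr hε), Complex.real_smul]
    push_cast
    field_simp
  have h3 : ∀ t : ℝ, g (x + ε * t) =
      (2 * Complex.I / ε) * (f (x + ε * t) * (((1 + t ^ 2)⁻¹ : ℝ) : ℂ)) := by
    intro t
    have ha : (t : ℂ) - Complex.I ≠ 0 := by
      intro h
      have := congrArg Complex.im h
      simp at this
    have hb : (t : ℂ) + Complex.I ≠ 0 := by
      intro h
      have := congrArg Complex.im h
      simp at this
    have hab : (1 : ℂ) + (t : ℂ) ^ 2 = ((t : ℂ) - Complex.I) * ((t : ℂ) + Complex.I) := by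
      ring_nf
      rw [Complex.I_sq]
      ring
    have e1 : ((x + ε * t : ℝ) : ℂ) - (x + Complex.I * ε) = ε * ((t : ℂ) - Complex.I) := by
      push_cast
      ring
    have e2 : ((x + ε * t : ℝ) : ℂ) - (x - Complex.I * ε) = ε * ((t : ℂ) + Complex.I) := by
      push_cast
      ring
    simp only [hg]
    rw [e1, e2]
    push_cast
    rw [hab]
    field_simp
    ring
  rw [h1]
  simp_rw [h3]
  rw [integral_const_mul]
  have hI := Complex.I_ne_zero
  field_simp

/-- Sokhotski–Plemelj jump: for Schwartz `f`, the jump of its Cauchy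
transform across the real axis recovers `f`. -/
theorem cauchyTransform_jump (f : SchwartzMap ℝ ℂ) (x : ℝ) :
    Tendsto
      (fun ε : ℝ =>
        cauchyTransform f (x + Complex.I * ε) - cauchyTransform f (x - Complex.I * ε))
      (𝓝[>] (0 : ℝ)) (𝓝 (f x)) := by
  have hπ : (Real.pi : ℂ) ≠ 0 := by exact_mod_cast Real.pi_ne_zero
  have key : Tendsto (fun ε : ℝ => ∫ t : ℝ, f (x + ε * t) * (((1 + t ^ 2)⁻¹ : ℝ) : ℂ))
      (𝓝[>] (0 : ℝ)) (𝓝 (∫ t : ℝ, f x * (((1 + t ^ 2)⁻¹ : ℝ) : ℂ))) := by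
    obtain ⟨C, hC⟩ : ∃ C : ℝ, ∀ s, ‖f s‖ ≤ C := by
      obtain ⟨C, hC⟩ := f.decay 0 0
      exact ⟨C, fun s => by simpa using hC.2 s⟩
    have hcont : Continuous (fun t : ℝ => (1 + t ^ 2)⁻¹) :=
      (by fun_prop : Continuous (fun t : ℝ => 1 + t ^ 2)).inv₀ (fun t => by positivity)
    have hf := f.continuous
    apply tendsto_integral_filter_of_dominated_convergence (fun t : ℝ => C * (1 + t ^ 2)⁻¹)
    · refine Eventually.of_forall fun ε => Continuous.aestronglyMeasurable ?_
      exact (hf.comp (by fun_prop)).mul (Complex.continuous_ofReal.comp hcont)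
    · refine Eventually.of_forall fun ε => Eventually.of_forall fun t => ?_
      rw [norm_mul, Complex.norm_real, Real.norm_of_nonneg (by positivity)]
      exact mul_le_mul_of_nonneg_right (hC _) (by positivity)
    · exact integrable_inv_one_add_sq.const_mul C
    · refine Eventually.of_forall fun t => Tendsto.mul_const _ ?_
      have : Continuous (fun ε : ℝ => f (x + ε * t)) := hf.comp (by fun_prop)
      have h := this.tendsto 0
      simp only [zero_mul, add_zero] at h
      exact h.mono_left nhdsWithin_le_nhds
  rw [integral_const_mul, integral_complex_ofReal, integral_univ_inv_one_add_sq] at key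
  have h := key.const_mul (1 / (Real.pi : ℂ))
  have e : (1 / (Real.pi : ℂ)) * (f x * (Real.pi : ℂ)) = f x := by field_simp
  rw [e] at h
  refine h.congr' ?_
  filter_upwards [self_mem_nhdsWithin] with ε hε
  exact (cauchy_jump_aux f x ε hε).symm
end

section
/- Let f : ℝ → ℂ be integrable and let F be its Cauchy transform. Then lim_{y → +∞} (i y) · F(i y) = −(1/(2πi)) ∫_ℝ f(s) ds; equivalently, −2πi · lim_{y → +∞} (i y) F(i y) = ∫_ℝ f(s) ds. -/
open MeasureTheory Complex Filter Topology

theorem cauchyTransform_aux (f : ℝ → ℂ) (hf : Integrable f) :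
    Tendsto (fun y : ℝ => ∫ s : ℝ, (Complex.I * y) * (f s / ((s : ℂ) - Complex.I * y)))
      atTop (𝓝 (∫ s : ℝ, -f s)) := by
  refine tendsto_integral_filter_of_dominated_convergence (fun s => ‖f s‖) ?_ ?_ hf.norm ?_
  · refine Eventually.of_forall fun y => ?_
    refine AEStronglyMeasurable.const_mul ?_ _
    refine (hf.aestronglyMeasurable.aemeasurable.div ?_).aestronglyMeasurable
    exact (Complex.measurable_ofReal.sub_const _).aemeasurable
  · filter_upwards [eventually_gt_atTop 0] with y hy
    refine Eventually.of_forall fun s => ?_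
    have h1 : ‖Complex.I * (y : ℂ)‖ ≤ ‖(s : ℂ) - Complex.I * y‖ := by
      have h := Complex.abs_im_le_norm ((s : ℂ) - Complex.I * y)
      simpa using h
    have h2 : 0 < ‖Complex.I * (y : ℂ)‖ := by simpa using hy.ne'
    rw [norm_mul, norm_div, ← mul_div_assoc, div_le_iff₀ (h2.trans_le h1), mul_comm]
    exact mul_le_mul_of_nonneg_left h1 (norm_nonneg _)
  · refine Eventually.of_forall fun s => ?_
    have h0 : Tendsto (fun y : ℝ => (s : ℂ) * ((y : ℂ))⁻¹) atTop (𝓝 ((s : ℂ) * 0)) := by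
      refine Tendsto.const_mul _ ?_
      have := (Complex.continuous_ofReal.tendsto 0).comp tendsto_inv_atTop_zero
      simpa [Function.comp_def] using this
    have h1 : Tendsto (fun y : ℝ => Complex.I * f s / ((s : ℂ) * ((y : ℂ))⁻¹ - Complex.I)) atTop
        (𝓝 (Complex.I * f s / ((s : ℂ) * 0 - Complex.I))) :=
      tendsto_const_nhds.div (h0.sub_const _) (by simp)
    have h2 : Complex.I * f s / ((s : ℂ) * 0 - Complex.I) = -f s := by
      rw [mul_zero, zero_sub, div_neg, mul_div_cancel_left₀ _ Complex.I_ne_zero]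
    rw [h2] at h1
    refine h1.congr' ?_
    filter_upwards [eventually_gt_atTop 0] with y hy
    have hy' : (y : ℂ) ≠ 0 := by exact_mod_cast hy.ne'
    have h3 : (s : ℂ) - Complex.I * y = y * ((s : ℂ) * ((y : ℂ))⁻¹ - Complex.I) := by
      field_simp
    rw [h3, ← mul_div_assoc, mul_right_comm, mul_comm _ (y : ℂ), mul_div_mul_left _ _ hy']

/-- first-order large-`k` asymptotics of the Cauchy transform along
the imaginary axis: `lim_{y→∞} (iy) F(iy) = -(1/(2πi)) ∫ f`, equivalently
`-2πi lim_{y→∞} (iy) F(iy) = ∫ f`. -/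
theorem cauchyTransform_first_asymptotics (f : ℝ → ℂ) (hf : Integrable f) :
    Tendsto (fun y : ℝ => (Complex.I * y) * cauchyTransform f (Complex.I * y))
      atTop (𝓝 (-(1 / (2 * Real.pi * Complex.I)) * ∫ s : ℝ, f s)) ∧
    Tendsto (fun y : ℝ =>
        (-(2 * Real.pi * Complex.I)) * ((Complex.I * y) * cauchyTransform f (Complex.I * y)))
      atTop (𝓝 (∫ s : ℝ, f s)) := by
  have key := cauchyTransform_aux f hf
  have hc : (2 * Real.pi * Complex.I : ℂ) ≠ 0 := Complex.two_pi_I_ne_zero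
  have first : Tendsto (fun y : ℝ => (Complex.I * y) * cauchyTransform f (Complex.I * y))
      atTop (𝓝 (-(1 / (2 * Real.pi * Complex.I)) * ∫ s : ℝ, f s)) := by
    have h := key.const_mul (1 / (2 * Real.pi * Complex.I) : ℂ)
    rw [integral_neg, mul_neg, ← neg_mul] at h
    refine h.congr fun y => ?_
    rw [integral_const_mul, cauchyTransform, mul_left_comm]
  refine ⟨first, ?_⟩
  have h := first.const_mul (-(2 * Real.pi * Complex.I) : ℂ)
  rwa [← mul_assoc, neg_mul_neg, mul_one_div_cancel hc, one_mul] at h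
end

section
/- Let f : ℝ → ℂ be a Schwartz function. For (x,t) ∈ ℝ² define F_{x,t}(k) = (1/(2πi)) ∫_ℝ exp(i s x + i s³ t) f(s) / (s − k) ds for Im k ≠ 0. Then for every (x,t), the limit lim_{y → +∞} (i y) · F_{x,t}(i y) exists, and the function q(x,t) := −2πi · lim_{y → +∞} (i y) F_{x,t}(i y) is given by q(x,t) = ∫_ℝ exp(i k x + i k³ t) f(k) dk; in particular q is smooth and satisfies the linear KdV equation ∂_t q + ∂_x³ q = 0 on ℝ². -/
open MeasureTheory Complex Filter Topology

/-- The Ehrenpreis-form solution of the linear KdV equation built from `f`. -/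
noncomputable def ehrenpreis (f : ℝ → ℂ) (x t : ℝ) : ℂ :=
  ∫ k : ℝ, Complex.exp (Complex.I * k * x + Complex.I * (k : ℂ) ^ 3 * t) * f k

/-- The `(2,1)` entry of the solution of the lower-triangular Riemann–Hilbert
problem: the Cauchy transform of `s ↦ e^{isx+is³t} f(s)`. -/
noncomputable def rhpEntry (f : ℝ → ℂ) (x t : ℝ) (k : ℂ) : ℂ :=
  (1 / (2 * Real.pi * Complex.I)) *
    ∫ s : ℝ, Complex.exp (Complex.I * s * x + Complex.I * (s : ℂ) ^ 3 * t) * f s / ((s : ℂ) - k)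

/-- Continuous functions all of whose absolute moments are finite. -/
def RapidInt (f : ℝ → ℂ) : Prop :=
  Continuous f ∧ ∀ n : ℕ, Integrable (fun k : ℝ => |k| ^ n * ‖f k‖)

lemma RapidInt.mul_pow {f : ℝ → ℂ} (hf : RapidInt f) (m : ℕ) :
    RapidInt (fun k : ℝ => Complex.I * (k : ℂ) ^ m * f k) := by
  refine ⟨by have := hf.1; fun_prop, fun n => ?_⟩
  refine (hf.2 (n + m)).congr (Eventually.of_forall fun k => ?_)
  simp [pow_add, mul_assoc]

lemma RapidInt.norm_int {f : ℝ → ℂ} (hf : RapidInt f) : Integrable (fun k : ℝ => ‖f k‖) := by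
  simpa using hf.2 0

lemma rapidInt_schwartz (f : SchwartzMap ℝ ℂ) : RapidInt f := by
  refine ⟨f.continuous, fun n => ?_⟩
  simpa using f.integrable_pow_mul volume n

lemma norm_phase (k x t : ℝ) :
    ‖Complex.exp (Complex.I * k * x + Complex.I * (k : ℂ) ^ 3 * t)‖ = 1 := by
  have : Complex.I * k * x + Complex.I * (k : ℂ) ^ 3 * t
      = ((k * x + k ^ 3 * t : ℝ) : ℂ) * Complex.I := by push_cast; ring
  rw [this, Complex.norm_exp_ofReal_mul_I]

lemma RapidInt.integrable_phase {f : ℝ → ℂ} (hf : RapidInt f) (x t : ℝ) :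
    Integrable (fun k : ℝ =>
      Complex.exp (Complex.I * k * x + Complex.I * (k : ℂ) ^ 3 * t) * f k) := by
  have hc := hf.1
  refine hf.norm_int.mono' (by fun_prop) (Eventually.of_forall fun k => ?_)
  rw [norm_mul, norm_phase, one_mul]

/-- First coordinate as a complex-valued functional. -/
noncomputable def cfst : ℝ × ℝ →L[ℝ] ℂ := Complex.ofRealCLM.comp (ContinuousLinearMap.fst ℝ ℝ ℝ)
/-- Second coordinate as a complex-valued functional. -/
noncomputable def csnd : ℝ × ℝ →L[ℝ] ℂ := Complex.ofRealCLM.comp (ContinuousLinearMap.snd ℝ ℝ ℝ)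

lemma norm_cfst_le : ‖cfst‖ ≤ 1 :=
  ContinuousLinearMap.opNorm_le_bound _ zero_le_one fun p => by
    simpa [cfst] using norm_fst_le p

lemma norm_csnd_le : ‖csnd‖ ≤ 1 :=
  ContinuousLinearMap.opNorm_le_bound _ zero_le_one fun p => by
    simpa [csnd] using norm_snd_le p

lemma RapidInt.hasFDerivAt {f : ℝ → ℂ} (hf : RapidInt f) (p : ℝ × ℝ) :
    HasFDerivAt (fun p : ℝ × ℝ => ehrenpreis f p.1 p.2)
      (ehrenpreis (fun k : ℝ => Complex.I * (k : ℂ) ^ 1 * f k) p.1 p.2 • cfst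
        + ehrenpreis (fun k : ℝ => Complex.I * (k : ℂ) ^ 3 * f k) p.1 p.2 • csnd) p := by
  have hc := hf.1
  have h1 := hf.mul_pow 1
  have h3 := hf.mul_pow 3
  have key := hasFDerivAt_integral_of_dominated_of_fderiv_le (𝕜 := ℝ) (μ := (volume : Measure ℝ))
    (F := fun (p : ℝ × ℝ) (k : ℝ) =>
      Complex.exp (Complex.I * k * p.1 + Complex.I * (k : ℂ) ^ 3 * p.2) * f k)
    (F' := fun (p : ℝ × ℝ) (k : ℝ) =>
      (Complex.exp (Complex.I * k * p.1 + Complex.I * (k : ℂ) ^ 3 * p.2)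
        * (Complex.I * (k : ℂ) ^ 1 * f k)) • cfst +
      (Complex.exp (Complex.I * k * p.1 + Complex.I * (k : ℂ) ^ 3 * p.2)
        * (Complex.I * (k : ℂ) ^ 3 * f k)) • csnd)
    (x₀ := p) (s := Set.univ)
    (bound := fun k => ‖Complex.I * (k : ℂ) ^ 1 * f k‖ + ‖Complex.I * (k : ℂ) ^ 3 * f k‖)
    univ_mem (Eventually.of_forall fun p => (hf.integrable_phase p.1 p.2).aestronglyMeasurable)
    (hf.integrable_phase p.1 p.2)
    ((((h1.integrable_phase p.1 p.2).smul_const cfst).add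
      ((h3.integrable_phase p.1 p.2).smul_const csnd)).aestronglyMeasurable)
    (Eventually.of_forall fun k p _ => ?_) (h1.norm_int.add h3.norm_int)
    (Eventually.of_forall fun k p _ => ?_)
  · refine key.congr_fderiv ?_
    rw [integral_add ((h1.integrable_phase p.1 p.2).smul_const cfst)
      ((h3.integrable_phase p.1 p.2).smul_const csnd), integral_smul_const, integral_smul_const]
    rfl
  · refine (norm_add_le _ _).trans (add_le_add ?_ ?_)
    · rw [norm_smul, norm_mul, norm_phase, one_mul]
      exact mul_le_of_le_one_right (norm_nonneg _) norm_cfst_le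
    · rw [norm_smul, norm_mul, norm_phase, one_mul]
      exact mul_le_of_le_one_right (norm_nonneg _) norm_csnd_le
  · have e1 : HasFDerivAt (fun p : ℝ × ℝ => (p.1 : ℂ)) cfst p := cfst.hasFDerivAt
    have e2 : HasFDerivAt (fun p : ℝ × ℝ => (p.2 : ℂ)) csnd p := csnd.hasFDerivAt
    have e3 := (((e1.const_mul (Complex.I * k)).add
      (e2.const_mul (Complex.I * (k : ℂ) ^ 3))).cexp).mul_const (f k)
    refine e3.congr_fderiv ?_
    ext <;> simp <;> ring

lemma RapidInt.contDiff (n : ℕ) : ∀ {f : ℝ → ℂ}, RapidInt f →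
    ContDiff ℝ n (fun p : ℝ × ℝ => ehrenpreis f p.1 p.2) := by
  induction n with
  | zero =>
    intro f hf
    exact contDiff_zero.2 (continuous_iff_continuousAt.2 fun p => (hf.hasFDerivAt p).continuousAt)
  | succ n ih =>
    intro f hf
    have := contDiff_succ_iff_hasFDerivAt (𝕜 := ℝ) (n := n)
      (f := fun p : ℝ × ℝ => ehrenpreis f p.1 p.2)
    push_cast
    refine this.2 ⟨_, ?_, fun p => hf.hasFDerivAt p⟩
    exact ((ih (hf.mul_pow 1)).smul contDiff_const).add ((ih (hf.mul_pow 3)).smul contDiff_const)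

lemma RapidInt.deriv_x {f : ℝ → ℂ} (hf : RapidInt f) (t : ℝ) :
    deriv (fun ξ : ℝ => ehrenpreis f ξ t)
      = fun ξ => ehrenpreis (fun k : ℝ => Complex.I * (k : ℂ) ^ 1 * f k) ξ t := by
  ext x
  have h := (hf.hasFDerivAt (x, t)).comp_hasDerivAt x
    ((hasDerivAt_id x).prodMk (hasDerivAt_const x t))
  simpa [cfst, csnd, Function.comp_def] using h.deriv

lemma RapidInt.deriv_t {f : ℝ → ℂ} (hf : RapidInt f) (x t : ℝ) :
    deriv (fun τ : ℝ => ehrenpreis f x τ) t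
      = ehrenpreis (fun k : ℝ => Complex.I * (k : ℂ) ^ 3 * f k) x t := by
  have h := (hf.hasFDerivAt (x, t)).comp_hasDerivAt t
    ((hasDerivAt_const t x).prodMk (hasDerivAt_id t))
  simpa [cfst, csnd, Function.comp_def] using h.deriv

lemma RapidInt.tendsto {f : ℝ → ℂ} (hf : RapidInt f) (x t : ℝ) :
    Tendsto (fun y : ℝ =>
          (-(2 * Real.pi * Complex.I)) * ((Complex.I * y) * rhpEntry f x t (Complex.I * y)))
        atTop (𝓝 (ehrenpreis f x t)) := by
  have hc := hf.1
  have hint := hf.integrable_phase x t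
  have heq : ∀ y : ℝ,
      (-(2 * Real.pi * Complex.I)) * ((Complex.I * y) * rhpEntry f x t (Complex.I * y))
      = ∫ s : ℝ, (-(Complex.I * y) / ((s : ℂ) - Complex.I * y)) *
        (Complex.exp (Complex.I * s * x + Complex.I * (s : ℂ) ^ 3 * t) * f s) := by
    intro y
    have hpi : (Real.pi : ℂ) ≠ 0 := by exact_mod_cast Real.pi_ne_zero
    have : (-(2 * Real.pi * Complex.I)) * ((Complex.I * y) * rhpEntry f x t (Complex.I * y))
      = (-(Complex.I * y)) * ∫ s : ℝ, Complex.exp (Complex.I * s * x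
          + Complex.I * (s : ℂ) ^ 3 * t) * f s / ((s : ℂ) - Complex.I * y) := by
      unfold rhpEntry
      generalize (∫ s : ℝ, Complex.exp (Complex.I * s * x
          + Complex.I * (s : ℂ) ^ 3 * t) * f s / ((s : ℂ) - Complex.I * y)) = J
      field_simp
    rw [this, ← integral_const_mul]
    congr 1
    ext s
    ring
  simp_rw [heq]
  unfold ehrenpreis
  refine tendsto_integral_filter_of_dominated_convergence (fun s => ‖f s‖) ?_ ?_ hf.norm_int ?_
  · refine Eventually.of_forall fun y => ?_
    refine AEStronglyMeasurable.mul ?_ hint.aestronglyMeasurable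
    exact Measurable.aestronglyMeasurable (by fun_prop)
  · refine Eventually.of_forall fun y => Eventually.of_forall fun s => ?_
    rw [norm_mul, norm_mul, norm_phase, one_mul]
    refine mul_le_of_le_one_left (norm_nonneg _) ?_
    rw [norm_div]
    refine div_le_one_of_le₀ ?_ (norm_nonneg _)
    have := Complex.abs_im_le_norm ((s : ℂ) - Complex.I * y)
    simpa using this
  · refine Eventually.of_forall fun s => ?_
    have hlim : Tendsto (fun y : ℝ => -(Complex.I * y) / ((s : ℂ) - Complex.I * y)) atTop
        (𝓝 1) := by
      have h0 : Tendsto (fun y : ℝ => ((y⁻¹ : ℝ) : ℂ)) atTop (𝓝 0) := by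
        have := (Complex.continuous_ofReal.tendsto 0).comp tendsto_inv_atTop_zero
        simpa [Function.comp_def] using this
      have h1 : Tendsto (fun y : ℝ => -Complex.I / ((s : ℂ) * ((y⁻¹ : ℝ) : ℂ) - Complex.I)) atTop
          (𝓝 (-Complex.I / ((s : ℂ) * 0 - Complex.I))) :=
        tendsto_const_nhds.div ((h0.const_mul _).sub_const _) (by simp)
      have h2 : -Complex.I / ((s : ℂ) * 0 - Complex.I) = 1 := by simp
      rw [h2] at h1
      refine h1.congr' ?_
      filter_upwards [eventually_gt_atTop 0] with y hy
      have hy' : (y : ℂ) ≠ 0 := by exact_mod_cast hy.ne'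
      rw [← mul_div_mul_right _ _ hy', Complex.ofReal_inv, sub_mul, mul_assoc,
        inv_mul_cancel₀ hy', mul_one, neg_mul]
    simpa using hlim.mul_const
      (Complex.exp (Complex.I * s * x + Complex.I * (s : ℂ) ^ 3 * t) * f s)

/-- for Schwartz `f`, the limit `lim_{y→∞} (iy) F_{x,t}(iy)` exists, the
reconstruction `q(x,t) = -2πi lim_{y→∞} (iy) F_{x,t}(iy)` equals the Ehrenpreis integral
`∫ e^{ikx+ik³t} f(k) dk`; in particular `q` is smooth and solves the linear KdV equation. -/
theorem rhp_reconstruction_linear_kdv (f : SchwartzMap ℝ ℂ) :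
    (∀ x t : ℝ,
      Tendsto (fun y : ℝ =>
          (-(2 * Real.pi * Complex.I)) * ((Complex.I * y) * rhpEntry f x t (Complex.I * y)))
        atTop (𝓝 (ehrenpreis f x t))) ∧
    ContDiff ℝ (⊤ : ℕ∞) (fun p : ℝ × ℝ => ehrenpreis f p.1 p.2) ∧
    ∀ x t : ℝ,
      deriv (fun τ : ℝ => ehrenpreis f x τ) t
        + iteratedDeriv 3 (fun ξ : ℝ => ehrenpreis f ξ t) x = 0 := by
  have hf := rapidInt_schwartz f
  refine ⟨hf.tendsto, contDiff_infty.2 fun n => hf.contDiff n, fun x t => ?_⟩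
  have h1 := hf.mul_pow 1
  have h2 := h1.mul_pow 1
  rw [hf.deriv_t, iteratedDeriv_succ, iteratedDeriv_succ, iteratedDeriv_one, hf.deriv_x,
    h1.deriv_x, h2.deriv_x]
  unfold ehrenpreis
  rw [← integral_add ((hf.mul_pow 3).integrable_phase x t)
    ((h2.mul_pow 1).integrable_phase x t)]
  refine integral_eq_zero_of_ae (Eventually.of_forall fun k => ?_)
  have hI : Complex.I ^ 3 = -Complex.I := Complex.I_pow_three
  simp only [Pi.zero_apply]
  linear_combination (Complex.exp (Complex.I * k * x + Complex.I * (k : ℂ) ^ 3 * t)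
    * (k : ℂ) ^ 3 * f k) * hI
end

section
/- Let σ₃ be the 2×2 complex matrix diag(1, −1), let k ∈ ℂ be fixed, let Q : ℝ × ℝ → ℂ be smooth, and let Φ : ℝ × ℝ → Matrix (2×2, ℂ) be smooth with Φ(x,t) invertible for every (x,t). Suppose that for all (x,t) ∈ ℝ²: (i) −∂_x² Φ + 2 i k (∂_x Φ) σ₃ − Q(x,t) Φ = 0, and (ii) −∂_t Φ + 4 i k³ Φ σ₃ = (2 Q(x,t) − 4 k²) ( ∂_x Φ − i k Φ σ₃ ) − (∂_x Q)(x,t) Φ. Then Q satisfies the KdV equation: ∂_t Q + 6 Q ∂_x Q + ∂_x³ Q = 0 at every (x,t) ∈ ℝ². -/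
open Matrix Complex

/-- The Pauli matrix σ₃ = diag(1, -1). -/
noncomputable def sigma3 : Matrix (Fin 2) (Fin 2) ℂ := !![1, 0; 0, -1]

/-- Entrywise partial derivative of a matrix-valued function of `(x,t)` in `x`. -/
noncomputable def matDx (Φ : ℝ → ℝ → Matrix (Fin 2) (Fin 2) ℂ) (x t : ℝ) :
    Matrix (Fin 2) (Fin 2) ℂ :=
  Matrix.of fun i j => deriv (fun ξ : ℝ => Φ ξ t i j) x

/-- Entrywise second partial derivative of a matrix-valued function in `x`. -/
noncomputable def matDxx (Φ : ℝ → ℝ → Matrix (Fin 2) (Fin 2) ℂ) (x t : ℝ) :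
    Matrix (Fin 2) (Fin 2) ℂ :=
  Matrix.of fun i j => iteratedDeriv 2 (fun ξ : ℝ => Φ ξ t i j) x

/-- Entrywise partial derivative of a matrix-valued function of `(x,t)` in `t`. -/
noncomputable def matDt (Φ : ℝ → ℝ → Matrix (Fin 2) (Fin 2) ℂ) (x t : ℝ) :
    Matrix (Fin 2) (Fin 2) ℂ :=
  Matrix.of fun i j => deriv (fun τ : ℝ => Φ x τ i j) t

/-- Directional derivative on the plane. -/
noncomputable def dirD (v : ℝ × ℝ) (F : ℝ × ℝ → ℂ) : ℝ × ℝ → ℂ := fun p => fderiv ℝ F p v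

theorem dirD_smooth (v : ℝ × ℝ) {F : ℝ × ℝ → ℂ} (hF : ContDiff ℝ (⊤ : ℕ∞) F) :
    ContDiff ℝ (⊤ : ℕ∞) (dirD v F) := by
  unfold dirD
  exact (hF.fderiv_right (m := (⊤ : ℕ∞)) (by simp)).clm_apply contDiff_const

theorem smooth_diffAt {F : ℝ × ℝ → ℂ} (hF : ContDiff ℝ (⊤ : ℕ∞) F) (p : ℝ × ℝ) :
    DifferentiableAt ℝ F p := hF.differentiable (by simp) p

theorem dirD_comm (v w : ℝ × ℝ) {F : ℝ × ℝ → ℂ} (hF : ContDiff ℝ (⊤ : ℕ∞) F) :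
    dirD v (dirD w F) = dirD w (dirD v F) := by
  funext p
  have hd : DifferentiableAt ℝ (fderiv ℝ F) p :=
    (hF.fderiv_right (m := (⊤ : ℕ∞)) (by simp)).differentiable (by simp) p
  have hs : IsSymmSndFDerivAt ℝ F p :=
    (hF.contDiffAt).isSymmSndFDerivAt (by
      simp only [minSmoothness_of_isRCLikeNormedField]
      exact WithTop.coe_le_coe.2 (le_top : (2 : ℕ∞) ≤ ⊤))
  have key : ∀ a b : ℝ × ℝ, dirD a (dirD b F) p = fderiv ℝ (fderiv ℝ F) p a b := by
    intro a b
    have := (hd.hasFDerivAt.clm_apply (hasFDerivAt_const b p)).fderiv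
    unfold dirD
    rw [this]
    simp
  rw [key, key]
  exact hs.eq v w

theorem dirD_add (v : ℝ × ℝ) {F G : ℝ × ℝ → ℂ} (hF : ContDiff ℝ (⊤ : ℕ∞) F)
    (hG : ContDiff ℝ (⊤ : ℕ∞) G) : dirD v (F + G) = dirD v F + dirD v G := by
  funext p
  simp [dirD, fderiv_add (smooth_diffAt hF p) (smooth_diffAt hG p)]

theorem dirD_mul (v : ℝ × ℝ) {F G : ℝ × ℝ → ℂ} (hF : ContDiff ℝ (⊤ : ℕ∞) F)
    (hG : ContDiff ℝ (⊤ : ℕ∞) G) : dirD v (F * G) = dirD v F * G + F * dirD v G := by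
  funext p
  simp [dirD, fderiv_mul (smooth_diffAt hF p) (smooth_diffAt hG p)]
  ring

theorem dirD_smul (v : ℝ × ℝ) (c : ℂ) {F : ℝ × ℝ → ℂ} (hF : ContDiff ℝ (⊤ : ℕ∞) F) :
    dirD v (c • F) = c • dirD v F := by
  funext p
  simp [dirD, fderiv_const_smul (smooth_diffAt hF p)]

theorem deriv_fst {F : ℝ × ℝ → ℂ} (hF : ContDiff ℝ (⊤ : ℕ∞) F) (t : ℝ) :
    deriv (fun ξ : ℝ => F (ξ, t)) = fun x => dirD (1, 0) F (x, t) := by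
  funext x
  have h1 : HasDerivAt (fun ξ : ℝ => (ξ, t)) ((1 : ℝ), (0 : ℝ)) x :=
    (hasDerivAt_id x).prodMk (hasDerivAt_const x t)
  exact ((smooth_diffAt hF (x, t)).hasFDerivAt.comp_hasDerivAt x h1).deriv

theorem deriv_snd {F : ℝ × ℝ → ℂ} (hF : ContDiff ℝ (⊤ : ℕ∞) F) (x t : ℝ) :
    deriv (fun τ : ℝ => F (x, τ)) t = dirD (0, 1) F (x, t) := by
  have h1 : HasDerivAt (fun τ : ℝ => (x, τ)) ((0 : ℝ), (1 : ℝ)) t :=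
    (hasDerivAt_const t x).prodMk (hasDerivAt_id t)
  exact ((smooth_diffAt hF (x, t)).hasFDerivAt.comp_hasDerivAt t h1).deriv

/-- Scalar compatibility computation. -/
theorem scalar_compat (a : ℂ) {q f : ℝ × ℝ → ℂ} (v w : ℝ × ℝ)
    (hq : ContDiff ℝ (⊤ : ℕ∞) q) (hf : ContDiff ℝ (⊤ : ℕ∞) f)
    (h1 : dirD v (dirD v f) = (2 * a) • dirD v f + (-1 : ℂ) • (q * f))
    (h2 : dirD w f = (-2 : ℂ) • (q * dirD v f) + (-4 * a ^ 2) • dirD v f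
      + (2 * a) • (q * f) + dirD v q * f) (p : ℝ × ℝ) :
    (dirD w q p + 6 * q p * dirD v q p + dirD v (dirD v (dirD v q)) p) * f p = 0 := by
  have sq1 := dirD_smooth v hq
  have sq2 := dirD_smooth v sq1
  have sf1 := dirD_smooth v hf
  have c (b : ℂ) {g : ℝ × ℝ → ℂ} (hg : ContDiff ℝ (⊤ : ℕ∞) g) :
    ContDiff ℝ (⊤ : ℕ∞) (b • g) := contDiff_const.smul hg
  have ad {g h : ℝ × ℝ → ℂ} (hg : ContDiff ℝ (⊤ : ℕ∞) g) (hh : ContDiff ℝ (⊤ : ℕ∞) h) :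
    ContDiff ℝ (⊤ : ℕ∞) (g + h) := hg.add hh
  have mu {g h : ℝ × ℝ → ℂ} (hg : ContDiff ℝ (⊤ : ℕ∞) g) (hh : ContDiff ℝ (⊤ : ℕ∞) h) :
    ContDiff ℝ (⊤ : ℕ∞) (g * h) := hg.mul hh
  have E1 : dirD v (dirD w f) =
      (-1 : ℂ) • (dirD v q * dirD v f) + (-2 * a) • (q * dirD v f)
      + (2 : ℂ) • (q * (q * f)) + (-8 * a ^ 3) • dirD v f + (4 * a ^ 2) • (q * f)
      + (2 * a) • (dirD v q * f) + dirD v (dirD v q) * f := by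
    rw [h2]
    simp (disch := (repeat (first | assumption | apply ad | apply c | apply mu))) only
      [dirD_add, dirD_smul, dirD_mul]
    rw [h1]
    funext z
    simp only [Pi.add_apply, Pi.smul_apply, Pi.mul_apply, smul_eq_mul]
    ring
  have E2 : dirD v (dirD v (dirD w f)) = dirD w (dirD v (dirD v f)) := by
    rw [dirD_comm v w hf, dirD_comm v w sf1]
  rw [h1] at E2
  have E3 := congrFun E2 p
  rw [E1] at E3
  simp (disch := (repeat (first | assumption | apply ad | apply c | apply mu))) only
      [dirD_add, dirD_smul, dirD_mul] at E3
  rw [dirD_comm w v hf, h1, E1, h2] at E3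
  simp only [Pi.add_apply, Pi.smul_apply, Pi.mul_apply, smul_eq_mul] at E3
  linear_combination E3

/-- dressing method compatibility: if `Φ` is a smooth, everywhere
invertible matrix solution of the Lax pair (i)–(ii) with potential `Q`, then `Q`
solves the KdV equation `Q_t + 6 Q Q_x + Q_xxx = 0`. -/
theorem dressing_compatibility_kdv (k : ℂ) (Q : ℝ → ℝ → ℂ)
    (Φ : ℝ → ℝ → Matrix (Fin 2) (Fin 2) ℂ)
    (hQ : ContDiff ℝ (⊤ : ℕ∞) (fun p : ℝ × ℝ => Q p.1 p.2))
    (hΦ : ∀ i j : Fin 2, ContDiff ℝ (⊤ : ℕ∞) (fun p : ℝ × ℝ => Φ p.1 p.2 i j))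
    (hinv : ∀ x t : ℝ, IsUnit (Φ x t))
    (heq1 : ∀ x t : ℝ,
      -matDxx Φ x t + (2 * Complex.I * k) • (matDx Φ x t * sigma3) - Q x t • Φ x t = 0)
    (heq2 : ∀ x t : ℝ,
      -matDt Φ x t + (4 * Complex.I * k ^ 3) • (Φ x t * sigma3)
        = (2 * Q x t - 4 * k ^ 2) •
            (matDx Φ x t - (Complex.I * k) • (Φ x t * sigma3))
          - (deriv (fun ξ : ℝ => Q ξ t) x) • Φ x t) :
    ∀ x t : ℝ,
      deriv (fun τ : ℝ => Q x τ) t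
        + 6 * Q x t * deriv (fun ξ : ℝ => Q ξ t) x
        + iteratedDeriv 3 (fun ξ : ℝ => Q ξ t) x = 0 := by
  intro x t
  set q : ℝ × ℝ → ℂ := fun p => Q p.1 p.2 with hqdef
  have dq1 : ∀ t, deriv (fun ξ : ℝ => Q ξ t) = fun x => dirD (1, 0) q (x, t) :=
    fun t => deriv_fst hQ t
  have dq2 : ∀ t, deriv (fun x => dirD (1, 0) q (x, t))
      = fun x => dirD (1, 0) (dirD (1, 0) q) (x, t) :=
    fun t => deriv_fst (dirD_smooth _ hQ) t
  have dq3 : ∀ t, deriv (fun x => dirD (1, 0) (dirD (1, 0) q) (x, t))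
      = fun x => dirD (1, 0) (dirD (1, 0) (dirD (1, 0) q)) (x, t) :=
    fun t => deriv_fst (dirD_smooth _ (dirD_smooth _ hQ)) t
  have dqt : deriv (fun τ : ℝ => Q x τ) t = dirD (0, 1) q (x, t) := deriv_snd hQ x t
  have entry : ∀ i j : Fin 2, (dirD (0, 1) q (x, t) + 6 * q (x, t) * dirD (1, 0) q (x, t)
      + dirD (1, 0) (dirD (1, 0) (dirD (1, 0) q)) (x, t)) * Φ x t i j = 0 := by
    intro i j
    have hf := hΦ i j
    set f : ℝ × ℝ → ℂ := fun p => Φ p.1 p.2 i j with hfdef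
    have df1 : ∀ t, deriv (fun ξ : ℝ => Φ ξ t i j) = fun x => dirD (1, 0) f (x, t) :=
      fun t => deriv_fst hf t
    have df2 : ∀ t, deriv (fun x => dirD (1, 0) f (x, t))
        = fun x => dirD (1, 0) (dirD (1, 0) f) (x, t) :=
      fun t => deriv_fst (dirD_smooth _ hf) t
    have dft : ∀ x t, deriv (fun τ : ℝ => Φ x τ i j) t = dirD (0, 1) f (x, t) :=
      fun x t => deriv_snd hf x t
    obtain ⟨s, hs, hsig⟩ : ∃ s : ℂ, s ^ 2 = 1 ∧
        ∀ M : Matrix (Fin 2) (Fin 2) ℂ, (M * sigma3) i j = s * M i j := by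
      refine ⟨if j = 0 then 1 else -1, by split_ifs <;> norm_num, fun M => ?_⟩
      fin_cases j <;> simp [sigma3, Matrix.mul_apply, Fin.sum_univ_two]
    have hI : Complex.I ^ 2 = -1 := Complex.I_sq
    refine scalar_compat (Complex.I * k * s) (1, 0) (0, 1) hQ hf ?_ ?_ (x, t)
    · funext ⟨y, r⟩
      have h := congrFun (congrFun (heq1 y r) i) j
      simp only [Matrix.add_apply, Matrix.sub_apply, Matrix.neg_apply, Matrix.smul_apply, hsig,
        matDxx, matDx, Matrix.of_apply, smul_eq_mul, Matrix.zero_apply, iteratedDeriv_succ,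
        iteratedDeriv_zero, df1, df2] at h
      simp only [Pi.add_apply, Pi.smul_apply, Pi.mul_apply, smul_eq_mul, hqdef, hfdef] at h ⊢
      linear_combination -h
    · funext ⟨y, r⟩
      have h := congrFun (congrFun (heq2 y r) i) j
      simp only [Matrix.add_apply, Matrix.sub_apply, Matrix.neg_apply, Matrix.smul_apply, hsig,
        matDt, matDx, Matrix.of_apply, smul_eq_mul, df1, dft, dq1] at h
      simp only [Pi.add_apply, Pi.smul_apply, Pi.mul_apply, smul_eq_mul, hqdef, hfdef] at h ⊢
      have hsI : (Complex.I * k * s) ^ 2 = -k ^ 2 := by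
        rw [mul_pow, mul_pow, hs, hI]; ring
      rw [hsI]
      linear_combination -h
  have hne : ∃ i j, Φ x t i j ≠ 0 := by
    by_contra hcon
    push Not at hcon
    have h0 : Φ x t = 0 := by
      ext i j
      exact hcon i j
    exact (hinv x t).ne_zero h0
  obtain ⟨i, j, hij⟩ := hne
  have := (mul_eq_zero.1 (entry i j)).resolve_right hij
  rw [dqt]
  simp only [iteratedDeriv_succ, iteratedDeriv_zero, dq1, dq2, dq3]
  exact this
end
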